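/- Let G^i be a spray with coefficients N^i_j and let F̃ : Ω → ℝ be smooth, positive and positively 1-homogeneous in y. Assume that ∇(∂²F̃/∂y^i∂y^j) = S(∂²F̃/∂y^i∂y^j) − Σ_k (N^k_i ∂²F̃/∂y^k∂y^j + N^k_j ∂²F̃/∂y^i∂y^k) = 0 on Ω for all i, j. Define ω_{kj} = δ/δx^k(∂F̃/∂y^j) − δ/δx^j(∂F̃/∂y^k) on Ω. Then ∂ω_{kj}/∂y^i = 0 on Ω for all i, j, k; that is, each ω_{kj} has vanishing fibre derivatives (it is a basic function of x along each fibre). -/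

import Mathlib

noncomputable section

/-- A point `(x, y)` of the tangent space coordinates over `ℝⁿ`. -/
abbrev Pt (n : ℕ) : Type := (Fin n → ℝ) × (Fin n → ℝ)

/-- `Ω = U × (ℝⁿ \ {0})`. -/
def OmegaSet {n : ℕ} (U : Set (Fin n → ℝ)) : Set (Pt n) :=
  {p : Pt n | p.1 ∈ U ∧ p.2 ≠ 0}

/-- Partial derivative `∂f/∂x^i`. -/
def pdx {n : ℕ} (f : Pt n → ℝ) (i : Fin n) (p : Pt n) : ℝ :=
  fderiv ℝ f p (Pi.single i 1, 0)

/-- Partial derivative `∂f/∂y^i`. -/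
def pdy {n : ℕ} (f : Pt n → ℝ) (i : Fin n) (p : Pt n) : ℝ :=
  fderiv ℝ f p (0, Pi.single i 1)

/-- Second fibre derivative `∂²f/∂y^i∂y^j`. -/
def pdyy {n : ℕ} (f : Pt n → ℝ) (i j : Fin n) : Pt n → ℝ :=
  pdy (pdy f j) i

/-- The spray vector field applied to a function:
`S(f) = Σ_k (y^k ∂f/∂x^k − 2 G^k ∂f/∂y^k)`. -/
def Sop {n : ℕ} (G : Fin n → Pt n → ℝ) (f : Pt n → ℝ) (p : Pt n) : ℝ :=
  ∑ k, (p.2 k * pdx f k p - 2 * G k p * pdy f k p)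

/-- Connection coefficients `N^i_j = ∂G^i/∂y^j`. -/
def Ncoef {n : ℕ} (G : Fin n → Pt n → ℝ) (i j : Fin n) : Pt n → ℝ :=
  pdy (G i) j

/-- Horizontal derivative `δf/δx^i = ∂f/∂x^i − Σ_j N^j_i ∂f/∂y^j`. -/
def deltax {n : ℕ} (G : Fin n → Pt n → ℝ) (f : Pt n → ℝ) (i : Fin n) (p : Pt n) : ℝ :=
  pdx f i p - ∑ j, Ncoef G j i p * pdy f j p

/-- Dynamical covariant derivative of a `(0,2)` family:
`∇T_{ij} = S(T_{ij}) − Σ_k (N^k_i T_{kj} + N^k_j T_{ik})`. -/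
def nablaT {n : ℕ} (G : Fin n → Pt n → ℝ) (T : Fin n → Fin n → Pt n → ℝ)
    (i j : Fin n) (p : Pt n) : ℝ :=
  Sop G (T i j) p - ∑ k, (Ncoef G k i p * T k j p + Ncoef G k j p * T i k p)

/-- `f` is positively `k`-homogeneous in the fibre variable `y`, on `Ω`. -/
def PosHomog {n : ℕ} (U : Set (Fin n → ℝ)) (k : ℤ) (f : Pt n → ℝ) : Prop :=
  ∀ L : ℝ, 0 < L → ∀ p ∈ OmegaSet U, f (p.1, L • p.2) = L ^ k * f p

/-- A spray: smooth, positively 2-homogeneous coefficients `G^i`. -/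
def IsSpray {n : ℕ} (U : Set (Fin n → ℝ)) (G : Fin n → Pt n → ℝ) : Prop :=
  ∀ i, ContDiffOn ℝ (⊤ : ℕ∞) (G i) (OmegaSet U) ∧ PosHomog U 2 (G i)

/-- Components of the Euler-Lagrange 1-form: `(δ_S f)_i = S(∂f/∂y^i) − ∂f/∂x^i`. -/
def EL {n : ℕ} (G : Fin n → Pt n → ℝ) (f : Pt n → ℝ) (i : Fin n) (p : Pt n) : ℝ :=
  Sop G (pdy f i) p - pdx f i p

/-- The metric tensor `g_{ij} = ½ ∂²(F²)/∂y^i∂y^j` of a Finsler function. -/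
def metricTensor {n : ℕ} (F : Pt n → ℝ) (i j : Fin n) (p : Pt n) : ℝ :=
  (1 / 2) * pdyy (fun q => F q ^ 2) i j p

/-- A Finsler structure on `U`: smooth, positive, positively 1-homogeneous,
with invertible metric tensor at every point of `Ω`. -/
def IsFinsler {n : ℕ} (U : Set (Fin n → ℝ)) (F : Pt n → ℝ) : Prop :=
  ContDiffOn ℝ (⊤ : ℕ∞) F (OmegaSet U) ∧ (∀ p ∈ OmegaSet U, 0 < F p) ∧ PosHomog U 1 F ∧
    ∀ p ∈ OmegaSet U, IsUnit (Matrix.of (fun i j => metricTensor F i j p))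

/-!
Write `F_{ij} = ∂²F/∂yⁱ∂yʲ`. Differentiating `∇F_{ij}` along the fibre gives
`∂(∇F_{ij})/∂yᵏ = F_{ij|k} + ∇F_{ijk}`, where `|k` is the horizontal Berwald derivative and
`F_{ijk} = ∂F_{ij}/∂yᵏ`. Skew-symmetrising in `j, k` kills `∇F_{ijk}`, as `F_{ijk}` is totally
symmetric, and `F_{ij|k} - F_{ik|j}` is exactly `∂ω_{kj}/∂yⁱ`. Thus
`∂ω_{kj}/∂yⁱ = ∂(∇F_{ij})/∂yᵏ - ∂(∇F_{ik})/∂yʲ`, which vanishes as soon as every `∇F_{ij}` does.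
-/

open Filter Topology

theorem fderiv_fderiv_apply_comm {E E' : Type*} [NormedAddCommGroup E] [NormedSpace ℝ E]
    [NormedAddCommGroup E'] [NormedSpace ℝ E'] {f : E → E'} {x : E} (hf : ContDiffAt ℝ 2 f x)
    (v w : E) :
    fderiv ℝ (fun z => fderiv ℝ f z v) x w = fderiv ℝ (fun z => fderiv ℝ f z w) x v := by
  have hf' : DifferentiableAt ℝ (fderiv ℝ f) x :=
    (hf.fderiv_right (m := 1) (by norm_num)).differentiableAt one_ne_zero
  have hsymm : IsSymmSndFDerivAt ℝ f x := hf.isSymmSndFDerivAt (by simp)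
  rw [fderiv_clm_apply hf' (differentiableAt_const v),
    fderiv_clm_apply hf' (differentiableAt_const w)]
  simpa using hsymm w v

theorem isOpen_omegaSet {n : ℕ} {U : Set (Fin n → ℝ)} (hU : IsOpen U) : IsOpen (OmegaSet U) :=
  (hU.preimage continuous_fst).inter (isOpen_ne.preimage continuous_snd)

section PartialDerivatives

variable {n : ℕ} {f g : Pt n → ℝ} {p : Pt n}

theorem contDiffAt_pdx {m m' : WithTop ℕ∞} (hf : ContDiffAt ℝ m' f p) (hm : m + 1 ≤ m')
    (i : Fin n) : ContDiffAt ℝ m (pdx f i) p :=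
  (hf.fderiv_right hm).clm_apply contDiffAt_const

theorem contDiffAt_pdy {m m' : WithTop ℕ∞} (hf : ContDiffAt ℝ m' f p) (hm : m + 1 ≤ m')
    (i : Fin n) : ContDiffAt ℝ m (pdy f i) p :=
  (hf.fderiv_right hm).clm_apply contDiffAt_const

theorem differentiableAt_pdx (hf : ContDiffAt ℝ 2 f p) (i : Fin n) :
    DifferentiableAt ℝ (pdx f i) p :=
  (contDiffAt_pdx (m := 1) hf (by norm_num) i).differentiableAt one_ne_zero

theorem differentiableAt_pdy (hf : ContDiffAt ℝ 2 f p) (i : Fin n) :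
    DifferentiableAt ℝ (pdy f i) p :=
  (contDiffAt_pdy (m := 1) hf (by norm_num) i).differentiableAt one_ne_zero

theorem pdy_pdx_comm (hf : ContDiffAt ℝ 2 f p) (i j : Fin n) :
    pdy (pdx f i) j p = pdx (pdy f j) i p :=
  fderiv_fderiv_apply_comm hf _ _

theorem pdy_pdy_comm (hf : ContDiffAt ℝ 2 f p) (i j : Fin n) :
    pdy (pdy f i) j p = pdy (pdy f j) i p :=
  fderiv_fderiv_apply_comm hf _ _

theorem pdx_congr (h : f =ᶠ[𝓝 p] g) (i : Fin n) : pdx f i p = pdx g i p := by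
  rw [pdx, h.fderiv_eq, pdx]

theorem pdy_congr (h : f =ᶠ[𝓝 p] g) (i : Fin n) : pdy f i p = pdy g i p := by
  rw [pdy, h.fderiv_eq, pdy]

theorem pdy_add (hf : DifferentiableAt ℝ f p) (hg : DifferentiableAt ℝ g p) (i : Fin n) :
    pdy (fun q => f q + g q) i p = pdy f i p + pdy g i p := by
  simp [pdy, fderiv_fun_add hf hg]

theorem pdy_sub (hf : DifferentiableAt ℝ f p) (hg : DifferentiableAt ℝ g p) (i : Fin n) :
    pdy (fun q => f q - g q) i p = pdy f i p - pdy g i p := by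
  simp [pdy, fderiv_fun_sub hf hg]

theorem pdy_mul (hf : DifferentiableAt ℝ f p) (hg : DifferentiableAt ℝ g p) (i : Fin n) :
    pdy (fun q => f q * g q) i p = pdy f i p * g p + f p * pdy g i p := by
  simp only [pdy, fderiv_fun_mul hf hg, add_apply, smul_apply, smul_eq_mul]
  ring

theorem pdy_const_mul (hf : DifferentiableAt ℝ f p) (c : ℝ) (i : Fin n) :
    pdy (fun q => c * f q) i p = c * pdy f i p := by
  simp [pdy, fderiv_const_mul hf c]

theorem pdy_sum {ι : Type*} {s : Finset ι} {u : ι → Pt n → ℝ}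
    (hu : ∀ l ∈ s, DifferentiableAt ℝ (u l) p) (i : Fin n) :
    pdy (fun q => ∑ l ∈ s, u l q) i p = ∑ l ∈ s, pdy (u l) i p := by
  simp [pdy, fderiv_fun_sum hu]

theorem pdy_snd_apply (l k : Fin n) (p : Pt n) :
    pdy (fun q => q.2 l) k p = if l = k then 1 else 0 := by
  let coord : Pt n →L[ℝ] ℝ := (ContinuousLinearMap.proj l).comp (ContinuousLinearMap.snd ℝ _ _)
  have hcoord : fderiv ℝ (fun q : Pt n => q.2 l) p = coord := coord.fderiv
  simp [pdy, hcoord, coord, Pi.single_apply]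

theorem pdyy_symm (hf : ContDiffAt ℝ 2 f p) (i j : Fin n) : pdyy f i j p = pdyy f j i p :=
  pdy_pdy_comm hf j i

theorem pdy_pdyy_swap_left (hf : ContDiffAt ℝ 3 f p) (i j k : Fin n) :
    pdy (pdyy f i j) k p = pdy (pdyy f k j) i p :=
  pdy_pdy_comm (contDiffAt_pdy hf (by norm_num) j) i k

theorem pdy_pdyy_swap_right (hf : ContDiffAt ℝ 3 f p) (i j k : Fin n) :
    pdy (pdyy f i j) k p = pdy (pdyy f i k) j p := by
  have hsymm (a b : Fin n) : pdyy f a b =ᶠ[𝓝 p] pdyy f b a := by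
    filter_upwards [hf.eventually (by simp)] with q hq
    exact pdyy_symm (hq.of_le (by norm_num)) a b
  rw [pdy_congr (hsymm i j), pdy_pdyy_swap_left hf, pdy_congr (hsymm k i)]

end PartialDerivatives

section Spray

variable {n : ℕ}

/-- The coefficients `Gˡ_{ik} = ∂Nˡ_i/∂yᵏ` of the Berwald connection of the spray `G`. -/
def berwaldCoef (G : Fin n → Pt n → ℝ) (l i k : Fin n) : Pt n → ℝ :=
  pdy (Ncoef G l i) k

/-- Horizontal Berwald derivative of a `(0,2)` family:
`T_{ij|k} = δT_{ij}/δxᵏ − Σ_l (Gˡ_{ik} T_{lj} + Gˡ_{jk} T_{il})`. The last index is the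
direction of differentiation. -/
def berwaldDeriv (G : Fin n → Pt n → ℝ) (T : Fin n → Fin n → Pt n → ℝ)
    (i j k : Fin n) (p : Pt n) : ℝ :=
  deltax G (T i j) k p - ∑ l, (berwaldCoef G l i k p * T l j p + berwaldCoef G l j k p * T i l p)

/-- Dynamical covariant derivative of a `(0,3)` family, the analogue of `nablaT`:
`∇T_{ijk} = S(T_{ijk}) − Σ_l (Nˡ_i T_{ljk} + Nˡ_j T_{ilk} + Nˡ_k T_{ijl})`. -/
def nablaT₃ (G : Fin n → Pt n → ℝ) (T : Fin n → Fin n → Fin n → Pt n → ℝ)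
    (i j k : Fin n) (p : Pt n) : ℝ :=
  Sop G (T i j k) p -
    ∑ l, (Ncoef G l i p * T l j k p + Ncoef G l j p * T i l k p + Ncoef G l k p * T i j l p)

variable {G : Fin n → Pt n → ℝ} {f : Pt n → ℝ} {T : Fin n → Fin n → Pt n → ℝ} {p : Pt n}

theorem berwaldCoef_symm {l : Fin n} (hG : ContDiffAt ℝ 2 (G l) p) (i k : Fin n) :
    berwaldCoef G l i k p = berwaldCoef G l k i p :=
  pdy_pdy_comm hG i k

theorem sop_congr {g : Pt n → ℝ} (h : f =ᶠ[𝓝 p] g) : Sop G f p = Sop G g p := by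
  simp only [Sop, pdx_congr h, pdy_congr h]

theorem differentiableAt_deltax (hG : ∀ l, ContDiffAt ℝ 2 (G l) p) (hf : ContDiffAt ℝ 2 f p)
    (k : Fin n) : DifferentiableAt ℝ (deltax G f k) p :=
  (differentiableAt_pdx hf k).fun_sub <| .fun_sum fun l _ =>
    (differentiableAt_pdy (hG l) k).fun_mul (differentiableAt_pdy hf l)

theorem differentiableAt_sop (hG : ∀ l, DifferentiableAt ℝ (G l) p) (hf : ContDiffAt ℝ 2 f p) :
    DifferentiableAt ℝ (Sop G f) p :=
  .fun_sum fun l _ => (DifferentiableAt.fun_mul (by fun_prop) (differentiableAt_pdx hf l)).fun_sub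
    (((hG l).const_mul 2).fun_mul (differentiableAt_pdy hf l))

theorem pdy_deltax (hG : ∀ l, ContDiffAt ℝ 2 (G l) p) (hf : ContDiffAt ℝ 2 f p) (i k : Fin n) :
    pdy (deltax G f k) i p =
      deltax G (pdy f i) k p - ∑ l, berwaldCoef G l k i p * pdy f l p := by
  have hN (l : Fin n) : DifferentiableAt ℝ (Ncoef G l k) p := differentiableAt_pdy (hG l) k
  have hfy := differentiableAt_pdy hf
  unfold deltax
  rw [pdy_sub (differentiableAt_pdx hf k) (.fun_sum fun l _ => (hN l).fun_mul (hfy l)),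
    pdy_sum fun l _ => (hN l).fun_mul (hfy l), pdy_pdx_comm hf, sub_sub,
    ← Finset.sum_add_distrib]
  congr 1
  refine Finset.sum_congr rfl fun l _ => ?_
  rw [pdy_mul (hN l) (hfy l), pdy_pdy_comm hf l i, berwaldCoef, add_comm]

theorem pdy_sop (hG : ∀ l, DifferentiableAt ℝ (G l) p) (hf : ContDiffAt ℝ 2 f p) (k : Fin n) :
    pdy (Sop G f) k p =
      Sop G (pdy f k) p + deltax G f k p - ∑ l, Ncoef G l k p * pdy f l p := by
  have hy (l : Fin n) : DifferentiableAt ℝ (fun q : Pt n => q.2 l) p := by fun_prop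
  have hfx := differentiableAt_pdx hf
  have hfy := differentiableAt_pdy hf
  have hG₂ (l : Fin n) : DifferentiableAt ℝ (fun q => 2 * G l q) p := (hG l).const_mul 2
  have hterm (l : Fin n) :
      pdy (fun q => q.2 l * pdx f l q - 2 * G l q * pdy f l q) k p =
        (p.2 l * pdx (pdy f k) l p - 2 * G l p * pdy (pdy f k) l p) +
          (if l = k then pdx f l p else 0) - 2 * (Ncoef G l k p * pdy f l p) := by
    rw [pdy_sub ((hy l).fun_mul (hfx l)) ((hG₂ l).fun_mul (hfy l)), pdy_mul (hy l) (hfx l),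
      pdy_mul (hG₂ l) (hfy l), pdy_const_mul (hG l), pdy_snd_apply, pdy_pdx_comm hf,
      pdy_pdy_comm hf l k, ite_mul, one_mul, zero_mul, Ncoef]
    ring
  unfold Sop deltax
  rw [pdy_sum fun l _ => ((hy l).fun_mul (hfx l)).fun_sub ((hG₂ l).fun_mul (hfy l))]
  simp only [hterm, Finset.sum_sub_distrib, Finset.sum_add_distrib, Finset.sum_ite_eq',
    Finset.mem_univ, if_true, ← Finset.mul_sum]
  ring

theorem pdy_nablaT (hG : ∀ l, ContDiffAt ℝ 2 (G l) p) (hT : ∀ i j, ContDiffAt ℝ 2 (T i j) p)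
    (i j k : Fin n) :
    pdy (nablaT G T i j) k p =
      berwaldDeriv G T i j k p + nablaT₃ G (fun a b c => pdy (T a b) c) i j k p := by
  have hGd (l : Fin n) : DifferentiableAt ℝ (G l) p := (hG l).differentiableAt two_ne_zero
  have hTd (a b : Fin n) : DifferentiableAt ℝ (T a b) p := (hT a b).differentiableAt two_ne_zero
  have hN (l a : Fin n) : DifferentiableAt ℝ (Ncoef G l a) p := differentiableAt_pdy (hG l) a
  have hi (l : Fin n) := (hN l i).fun_mul (hTd l j)
  have hj (l : Fin n) := (hN l j).fun_mul (hTd i l)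
  have hterm (l : Fin n) :
      pdy (fun q => Ncoef G l i q * T l j q + Ncoef G l j q * T i l q) k p =
        (berwaldCoef G l i k p * T l j p + berwaldCoef G l j k p * T i l p) +
          (Ncoef G l i p * pdy (T l j) k p + Ncoef G l j p * pdy (T i l) k p) := by
    rw [pdy_add (hi l) (hj l), pdy_mul (hN l i) (hTd l j), pdy_mul (hN l j) (hTd i l),
      berwaldCoef, berwaldCoef]
    ring
  unfold nablaT berwaldDeriv nablaT₃
  rw [pdy_sub (differentiableAt_sop hGd (hT i j)) (.fun_sum fun l _ => (hi l).fun_add (hj l)),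
    pdy_sum fun l _ => (hi l).fun_add (hj l), pdy_sop hGd (hT i j)]
  simp only [hterm, Finset.sum_add_distrib]
  ring

theorem nablaT₃_swap_right {T₃ : Fin n → Fin n → Fin n → Pt n → ℝ}
    (hT₃ : ∀ i j k, T₃ i j k =ᶠ[𝓝 p] T₃ i k j) (i j k : Fin n) :
    nablaT₃ G T₃ i j k p = nablaT₃ G T₃ i k j p := by
  unfold nablaT₃
  rw [sop_congr (hT₃ i j k)]
  congr 1
  refine Finset.sum_congr rfl fun l _ => ?_
  rw [(hT₃ l j k).self_of_nhds, (hT₃ i l k).self_of_nhds, (hT₃ i j l).self_of_nhds,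
    add_right_comm]

theorem pdy_deltax_pdy_sub_swap {F : Pt n → ℝ} (hG : ∀ l, ContDiffAt ℝ 2 (G l) p)
    (hF : ContDiffAt ℝ 3 F p) (i j k : Fin n) :
    pdy (fun q => deltax G (pdy F j) k q - deltax G (pdy F k) j q) i p =
      berwaldDeriv G (pdyy F) i j k p - berwaldDeriv G (pdyy F) i k j p := by
  have hFy (a : Fin n) : ContDiffAt ℝ 2 (pdy F a) p := contDiffAt_pdy hF (by norm_num) a
  have hmixed : ∑ l, berwaldCoef G l j k p * pdyy F i l p =
      ∑ l, berwaldCoef G l k j p * pdyy F i l p :=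
    Finset.sum_congr rfl fun l _ => by rw [berwaldCoef_symm (hG l)]
  rw [pdy_sub (differentiableAt_deltax hG (hFy j) k) (differentiableAt_deltax hG (hFy k) j),
    pdy_deltax hG (hFy j), pdy_deltax hG (hFy k)]
  simp only [berwaldDeriv, Finset.sum_add_distrib, hmixed, berwaldCoef_symm (hG _) i]
  simp only [pdyy]
  ring

theorem pdy_deltax_pdy_sub_swap_eq_pdy_nablaT {F : Pt n → ℝ} (hG : ∀ l, ContDiffAt ℝ 2 (G l) p)
    (hF : ContDiffAt ℝ 4 F p) (i j k : Fin n) :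
    pdy (fun q => deltax G (pdy F j) k q - deltax G (pdy F k) j q) i p =
      pdy (nablaT G (pdyy F) i j) k p - pdy (nablaT G (pdyy F) i k) j p := by
  have hFyy (a b : Fin n) : ContDiffAt ℝ 2 (pdyy F a b) p :=
    contDiffAt_pdy (contDiffAt_pdy (m := 3) hF (by norm_num) b) (by norm_num) a
  have hswap (a b c : Fin n) : pdy (pdyy F a b) c =ᶠ[𝓝 p] pdy (pdyy F a c) b := by
    filter_upwards [hF.eventually (by simp)] with q hq
    exact pdy_pdyy_swap_right (hq.of_le (by norm_num)) a b c
  rw [pdy_nablaT hG hFyy, pdy_nablaT hG hFyy, nablaT₃_swap_right hswap, add_sub_add_right_eq_sub,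
    pdy_deltax_pdy_sub_swap hG (hF.of_le (by norm_num))]

end Spray

theorem statement10_general {n : ℕ} {s : Set (Pt n)} (hs : IsOpen s) {G : Fin n → Pt n → ℝ}
    (hG : ∀ i, ContDiffOn ℝ 2 (G i) s) {F : Pt n → ℝ} (hF : ContDiffOn ℝ 4 F s)
    (h : ∀ i j, ∀ p ∈ s, nablaT G (pdyy F) i j p = 0) :
    ∀ i j k, ∀ p ∈ s,
      pdy (fun q => deltax G (pdy F j) k q - deltax G (pdy F k) j q) i p = 0 := by
  intro i j k p hp
  have hsp : s ∈ 𝓝 p := hs.mem_nhds hp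
  have hnabla (a b c : Fin n) : pdy (nablaT G (pdyy F) a b) c p = 0 := by
    have hzero : nablaT G (pdyy F) a b =ᶠ[𝓝 p] fun _ => 0 := eventually_of_mem hsp (h a b)
    rw [pdy_congr hzero]
    simp [pdy]
  rw [pdy_deltax_pdy_sub_swap_eq_pdy_nablaT (fun l => (hG l).contDiffAt hsp)
    (hF.contDiffAt hsp), hnabla, hnabla, sub_zero]

/-- if `∇(∂²F̃/∂y^i∂y^j) = 0` on `Ω`, then the functions
`ω_{kj} = δ/δx^k(∂F̃/∂y^j) − δ/δx^j(∂F̃/∂y^k)` have vanishing fibre derivatives on `Ω`. -/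
theorem statement10 {n : ℕ} (hn : 1 ≤ n) (U : Set (Fin n → ℝ)) (hU : IsOpen U)
    (G : Fin n → Pt n → ℝ) (hG : IsSpray U G)
    (Ft : Pt n → ℝ) (hFs : ContDiffOn ℝ (⊤ : ℕ∞) Ft (OmegaSet U))
    (hFpos : ∀ p ∈ OmegaSet U, 0 < Ft p) (hFh : PosHomog U 1 Ft)
    (h : ∀ i j, ∀ p ∈ OmegaSet U, nablaT G (pdyy Ft) i j p = 0) :
    ∀ i j k, ∀ p ∈ OmegaSet U,
      pdy (fun q => deltax G (pdy Ft j) k q - deltax G (pdy Ft k) j q) i p = 0 :=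
  statement10_general (isOpen_omegaSet hU) (fun i => (hG i).1.of_le (by norm_cast))
    (hFs.of_le (by norm_cast)) h
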